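/- arXiv:1904.10919 — 2 statements merged into one kernel-verified Lean document; each statement's English description precedes it below -/
import Mathlib

section
/- Let n ≥ 2, A the Cartan matrix of type A_n, and ι an admissible sequence adapted to A. Then for all 1 ≤ j ≤ n and all integers s ≥ 1 − P(j), the type A boxes satisfy the identity B^A_s(j+1) = B^A_s(j) − β_{s+P(j), j}. -/
noncomputable section

/-- The coordinate linear form `x_k` (as a coefficient vector). -/
def xc (k : ℕ) : ℕ → ℚ := fun l => if l = k then 1 else 0

/-- Cartan matrix of type `A_n`. -/
def cartanA (_n : ℕ) (i j : ℕ) : ℤ :=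
  if i = j then 2 else if i + 1 = j ∨ j + 1 = i then -1 else 0

/-- Cartan matrix of type `B_n`. -/
def cartanB (n : ℕ) (i j : ℕ) : ℤ :=
  if i = j then 2
  else if i = n ∧ j = n - 1 then -2
  else if i + 1 = j ∨ j + 1 = i then -1 else 0

/-- Cartan matrix of type `C_n`. -/
def cartanC (n : ℕ) (i j : ℕ) : ℤ :=
  if i = j then 2
  else if i = n - 1 ∧ j = n then -2
  else if i + 1 = j ∨ j + 1 = i then -1 else 0

/-- Cartan matrix of type `D_n`. -/
def cartanD (n : ℕ) (i j : ℕ) : ℤ :=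
  if i = j then 2
  else if (i = n - 1 ∧ j = n) ∨ (i = n ∧ j = n - 1) then 0
  else if (i + 1 = j ∨ j + 1 = i) ∨ (i = n ∧ j = n - 2) ∨ (i = n - 2 ∧ j = n) then -1
  else 0

/-- `ι` (with positions indexed by `k ≥ 1`) takes values in `{1,…,n}`, has no two equal
consecutive entries, and every index occurs infinitely often. -/
def Admissible (n : ℕ) (ι : ℕ → ℕ) : Prop :=
  (∀ k, 1 ≤ k → 1 ≤ ι k ∧ ι k ≤ n) ∧
  (∀ k, 1 ≤ k → ι k ≠ ι (k + 1)) ∧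
  (∀ i, 1 ≤ i → i ≤ n → ∀ N, ∃ k, N ≤ k ∧ ι k = i)

/-- `k^+`: the next position after `k` carrying the same letter. -/
def kplus (ι : ℕ → ℕ) (k : ℕ) : ℕ := sInf {l | k < l ∧ ι l = ι k}

/-- `k^-`: the previous position (`≥ 1`) carrying the same letter, `0` if none. -/
def kminus (ι : ℕ → ℕ) (k : ℕ) : ℕ := sSup {l | 0 < l ∧ l < k ∧ ι l = ι k}

/-- The linear form `β_k` (with `β_0 = 0`). -/
def beta (A : ℕ → ℕ → ℤ) (ι : ℕ → ℕ) (k : ℕ) : ℕ → ℚ :=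
  if k = 0 then 0
  else xc k + (∑ j ∈ Finset.Ioo k (kplus ι k), (A (ι k) (ι j) : ℚ) • xc j) + xc (kplus ι k)

/-- The piecewise-linear operator `S_k`. -/
def Sop (A : ℕ → ℕ → ℤ) (ι : ℕ → ℕ) (k : ℕ) (φ : ℕ → ℚ) : ℕ → ℚ :=
  if 0 < φ k then φ - φ k • beta A ι k
  else φ - φ k • beta A ι (kminus ι k)

/-- Membership in `Ξ_ι`: forms obtained from some `x_{j_0}` by finitely many operators `S_k`. -/
inductive XiMem (A : ℕ → ℕ → ℤ) (ι : ℕ → ℕ) : (ℕ → ℚ) → Prop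
  | base (k : ℕ) (hk : 1 ≤ k) : XiMem A ι (xc k)
  | step (k : ℕ) (hk : 1 ≤ k) (φ : ℕ → ℚ) (h : XiMem A ι φ) : XiMem A ι (Sop A ι k φ)

/-- The set `Ξ_ι`. -/
def Xi (A : ℕ → ℕ → ℤ) (ι : ℕ → ℕ) : Set (ℕ → ℚ) := { φ | XiMem A ι φ }

/-- Forms obtained from a set `g` of generators by finitely many operators `S_k`. -/
inductive XiMemFrom (A : ℕ → ℕ → ℤ) (ι : ℕ → ℕ) (g : Set (ℕ → ℚ)) : (ℕ → ℚ) → Prop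
  | base (φ : ℕ → ℚ) (h : φ ∈ g) : XiMemFrom A ι g φ
  | step (k : ℕ) (hk : 1 ≤ k) (φ : ℕ → ℚ) (h : XiMemFrom A ι g φ) :
      XiMemFrom A ι g (Sop A ι k φ)

/-- `ι` is adapted to the Cartan matrix `A`: for `i ≠ j` with `a_{i,j} ≠ 0`, consecutive
members of the subsequence of `ι` consisting of the letters `i`, `j` are distinct. -/
def Adapted (n : ℕ) (A : ℕ → ℕ → ℤ) (ι : ℕ → ℕ) : Prop :=
  ∀ i j, 1 ≤ i → i ≤ n → 1 ≤ j → j ≤ n → i ≠ j → A i j ≠ 0 →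
    ∀ k l, 1 ≤ k → k < l → (ι k = i ∨ ι k = j) → (ι l = i ∨ ι l = j) →
      (∀ m, k < m → m < l → ι m ≠ i ∧ ι m ≠ j) → ι k ≠ ι l

/-- Position of the first occurrence of the letter `i` in `ι`. -/
def firstOcc (ι : ℕ → ℕ) (i : ℕ) : ℕ := sInf {k | 1 ≤ k ∧ ι k = i}

/-- `p_{i,j} = 1` iff the first occurrence of `i` precedes the first occurrence of `j`. -/
def pval (ι : ℕ → ℕ) (i j : ℕ) : ℕ := if firstOcc ι i < firstOcc ι j then 1 else 0

/-- The function `P(k)` for types A, B, C (and `P(k) = 0` for `k > n`, `k ≤ 1`). -/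
def PABC (ι : ℕ → ℕ) (n k : ℕ) : ℕ :=
  if k ≤ n then ∑ t ∈ Finset.Icc 2 k, pval ι t (t - 1) else 0

/-- The function `P(k)` for type D. -/
def PD (ι : ℕ → ℕ) (n k : ℕ) : ℕ :=
  if k = n then (∑ t ∈ Finset.Icc 2 (n - 2), pval ι t (t - 1)) + pval ι n (n - 2)
  else if k ≤ n then ∑ t ∈ Finset.Icc 2 k, pval ι t (t - 1) else 0

/-- `occPos ι j s`: the position of the `s`-th occurrence of the letter `j` in `ι`
(`0` for `s = 0`). -/
def occPos (ι : ℕ → ℕ) (j : ℕ) : ℕ → ℕ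
  | 0 => 0
  | s + 1 => sInf {k | occPos ι j s < k ∧ ι k = j}

/-- The double-indexed coordinate form `x_{s,j}`, with the conventions
`x_{s,0} = x_{s,n+1} = 0` and `x_{s,j} = 0` for `s ≤ 0`. -/
def xsj (ι : ℕ → ℕ) (n : ℕ) (s : ℤ) (j : ℕ) : ℕ → ℚ :=
  if 1 ≤ s ∧ 1 ≤ j ∧ j ≤ n then xc (occPos ι j s.toNat) else 0

/-- The double-indexed form `β_{s,j}`. -/
def betasj (A : ℕ → ℕ → ℤ) (ι : ℕ → ℕ) (s : ℤ) (j : ℕ) : ℕ → ℚ :=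
  beta A ι (occPos ι j s.toNat)

/-- The double-indexed operator `S_{m,j}`. -/
def Ssj (A : ℕ → ℕ → ℤ) (ι : ℕ → ℕ) (m j : ℕ) (φ : ℕ → ℚ) : ℕ → ℚ :=
  Sop A ι (occPos ι j m) φ

/- Entries of the ordered sets `J_X` are encoded as natural numbers:
an unbarred entry `j ∈ {1,…,n}` is encoded as `j`, a barred entry `j̄` is
encoded as `2n+1-j` (so that `n̄ = n+1, …, 1̄ = 2n` and the total order of
`J_B = J_C` is the numerical order), and the extra symbol `ovl(n+1)` of
types C and D is encoded as `0`. -/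

/-- The box of type A. -/
def boxA (ι : ℕ → ℕ) (n : ℕ) (s : ℤ) (j : ℕ) : ℕ → ℚ :=
  xsj ι n (s + (PABC ι n j : ℤ)) j - xsj ι n (s + (PABC ι n (j - 1) : ℤ) + 1) (j - 1)

/-- The box of type B. -/
def boxB (ι : ℕ → ℕ) (n : ℕ) (s : ℤ) (e : ℕ) : ℕ → ℚ :=
  if e ≤ n then
    xsj ι n (s + (PABC ι n e : ℤ)) e - xsj ι n (s + (PABC ι n (e - 1) : ℤ) + 1) (e - 1)
  else
    xsj ι n (s + (PABC ι n (2 * n - e) : ℤ) + (n : ℤ) - ((2 * n + 1 - e : ℕ) : ℤ) + 1)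
        (2 * n - e)
      - xsj ι n (s + (PABC ι n (2 * n + 1 - e) : ℤ) + (n : ℤ) - ((2 * n + 1 - e : ℕ) : ℤ) + 1)
          (2 * n + 1 - e)

/-- The box of type C (`ovl(n+1)` encoded as `0`). -/
def boxC (ι : ℕ → ℕ) (n : ℕ) (s : ℤ) (e : ℕ) : ℕ → ℚ :=
  if e = 0 then xsj ι n (s + (PABC ι n n : ℤ)) n
  else if e < n then
    xsj ι n (s + (PABC ι n e : ℤ)) e - xsj ι n (s + (PABC ι n (e - 1) : ℤ) + 1) (e - 1)
  else if e = n then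
    (2 : ℚ) • xsj ι n (s + (PABC ι n n : ℤ)) n
      - xsj ι n (s + (PABC ι n (n - 1) : ℤ) + 1) (n - 1)
  else if e = n + 1 then
    xsj ι n (s + (PABC ι n (n - 1) : ℤ) + 1) (n - 1)
      - (2 : ℚ) • xsj ι n (s + (PABC ι n n : ℤ) + 1) n
  else
    xsj ι n (s + (PABC ι n (2 * n - e) : ℤ) + (n : ℤ) - ((2 * n + 1 - e : ℕ) : ℤ) + 1)
        (2 * n - e)
      - xsj ι n (s + (PABC ι n (2 * n + 1 - e) : ℤ) + (n : ℤ) - ((2 * n + 1 - e : ℕ) : ℤ) + 1)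
          (2 * n + 1 - e)

/-- The box of type D (`ovl(n+1)` encoded as `0`, `n̄` as `n+1`, `ovl(n-1)` as `n+2`). -/
def boxD (ι : ℕ → ℕ) (n : ℕ) (s : ℤ) (e : ℕ) : ℕ → ℚ :=
  if e = 0 then xsj ι n (s + (PD ι n n : ℤ)) n
  else if e ≤ n - 2 then
    xsj ι n (s + (PD ι n e : ℤ)) e - xsj ι n (s + (PD ι n (e - 1) : ℤ) + 1) (e - 1)
  else if e = n - 1 then
    xsj ι n (s + (PD ι n (n - 1) : ℤ)) (n - 1) + xsj ι n (s + (PD ι n n : ℤ)) n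
      - xsj ι n (s + (PD ι n (n - 2) : ℤ) + 1) (n - 2)
  else if e = n then
    xsj ι n (s + (PD ι n n : ℤ)) n - xsj ι n (s + (PD ι n (n - 1) : ℤ) + 1) (n - 1)
  else if e = n + 1 then
    xsj ι n (s + (PD ι n (n - 1) : ℤ)) (n - 1) - xsj ι n (s + (PD ι n n : ℤ) + 1) n
  else if e = n + 2 then
    xsj ι n (s + (PD ι n (n - 2) : ℤ) + 1) (n - 2)
      - xsj ι n (s + (PD ι n (n - 1) : ℤ) + 1) (n - 1)
      - xsj ι n (s + (PD ι n n : ℤ) + 1) n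
  else
    xsj ι n (s + (PD ι n (2 * n - e) : ℤ) + (n : ℤ) - ((2 * n + 1 - e : ℕ) : ℤ)) (2 * n - e)
      - xsj ι n (s + (PD ι n (2 * n + 1 - e) : ℤ) + (n : ℤ) - ((2 * n + 1 - e : ℕ) : ℤ))
          (2 * n + 1 - e)

/-- The column tableau `[j_1,…,j_k]_s = Σ_{i=1}^k box_{s+k-i}(j_i)`. -/
def tab (box : ℤ → ℕ → ℕ → ℚ) (s : ℤ) (k : ℕ) (j : ℕ → ℕ) : ℕ → ℚ :=
  ∑ i ∈ Finset.Icc 1 k, box (s + (k : ℤ) - (i : ℤ)) (j i)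

/-- The set `Tab_{A,ι}`. -/
def TabA (ι : ℕ → ℕ) (n : ℕ) : Set (ℕ → ℚ) :=
  { T | ∃ (k : ℕ) (s : ℤ) (j : ℕ → ℕ),
      1 ≤ k ∧ k ≤ n ∧
      (∀ i, 1 ≤ i → i ≤ k → 1 ≤ j i ∧ j i ≤ n + 1) ∧
      (∀ i, 1 ≤ i → i < k → j i < j (i + 1)) ∧
      1 - (PABC ι n k : ℤ) ≤ s ∧
      T = tab (boxA ι n) s k j }

/-- `|·|` on encoded entries of `J_B = J_C`. -/
def absJ (n e : ℕ) : ℕ := if e ≤ n then e else 2 * n + 1 - e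

/-- The set `Tab_{B,ι}`. -/
def TabB (ι : ℕ → ℕ) (n : ℕ) : Set (ℕ → ℚ) :=
  { T | ∃ (k : ℕ) (s : ℤ) (j : ℕ → ℕ),
      1 ≤ k ∧ k ≤ n ∧
      (∀ i, 1 ≤ i → i ≤ k → 1 ≤ j i ∧ j i ≤ 2 * n) ∧
      (∀ i, 1 ≤ i → i < k → j i < j (i + 1)) ∧
      (k = n → ∀ l m, 1 ≤ l → l < m → m ≤ k → absJ n (j l) ≠ absJ n (j m)) ∧
      1 - (PABC ι n k : ℤ) ≤ s ∧
      T = tab (boxB ι n) s k j }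

/-- Defining conditions of `Tab_{C,ι}` on the data `(k,s,j)`. -/
def TabCcond (ι : ℕ → ℕ) (n : ℕ) (k : ℕ) (s : ℤ) (j : ℕ → ℕ) : Prop :=
  (1 ≤ k ∧ k ≤ n - 1 ∧
    (∀ i, 1 ≤ i → i ≤ k → 1 ≤ j i ∧ j i ≤ 2 * n) ∧
    (∀ i, 1 ≤ i → i < k → j i < j (i + 1)) ∧
    1 - (PABC ι n k : ℤ) ≤ s)
  ∨
  (j 1 = 0 ∧ 1 ≤ k ∧ k ≤ n + 1 ∧
    (∀ i, 2 ≤ i → i ≤ k → n + 1 ≤ j i ∧ j i ≤ 2 * n) ∧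
    (∀ i, 2 ≤ i → i < k → j i < j (i + 1)) ∧
    1 - (PABC ι n n : ℤ) ≤ s)

/-- The set `Tab_{C,ι}`. -/
def TabC (ι : ℕ → ℕ) (n : ℕ) : Set (ℕ → ℚ) :=
  { T | ∃ k s j, TabCcond ι n k s j ∧ T = tab (boxC ι n) s k j }

/-- The partial order on (encoded) `J_D`: `a ≤ b` iff `a = b`, or `a < b` numerically and
`(a,b)` is not the incomparable pair `(n, n̄)`. -/
def leD (n a b : ℕ) : Prop := a = b ∨ (a < b ∧ ¬(a = n ∧ b = n + 1))

/-- Defining conditions of `Tab_{D,ι}` on the data `(k,s,j)`. -/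
def TabDcond (ι : ℕ → ℕ) (n : ℕ) (k : ℕ) (s : ℤ) (j : ℕ → ℕ) : Prop :=
  (1 ≤ k ∧ k ≤ n - 2 ∧
    (∀ i, 1 ≤ i → i ≤ k → 1 ≤ j i ∧ j i ≤ 2 * n) ∧
    (∀ i, 1 ≤ i → i < k → ¬ leD n (j (i + 1)) (j i)) ∧
    1 - (PD ι n k : ℤ) ≤ s)
  ∨
  (j 1 = 0 ∧ 1 ≤ k ∧ k ≤ n + 1 ∧
    (∀ i, 2 ≤ i → i ≤ k → n + 1 ≤ j i ∧ j i ≤ 2 * n) ∧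
    (∀ i, 2 ≤ i → i < k → j i < j (i + 1)) ∧
    (k % 2 = 0 → 1 - (PD ι n (n - 1) : ℤ) ≤ s) ∧
    (k % 2 = 1 → 1 - (PD ι n n : ℤ) ≤ s))

/-- The set `Tab_{D,ι}`. -/
def TabD (ι : ℕ → ℕ) (n : ℕ) : Set (ℕ → ℚ) :=
  { T | ∃ k s j, TabDcond ι n k s j ∧ T = tab (boxD ι n) s k j }

end

theorem occ_succ_mem (n : ℕ) (ι : ℕ → ℕ) (hadm : Admissible n ι) (j : ℕ) (h1 : 1 ≤ j)
    (h2 : j ≤ n) (m : ℕ) :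
    occPos ι j m < occPos ι j (m + 1) ∧ ι (occPos ι j (m + 1)) = j := by
  have hne : {k | occPos ι j m < k ∧ ι k = j}.Nonempty := by
    obtain ⟨k, hk, hk'⟩ := hadm.2.2 j h1 h2 (occPos ι j m + 1)
    exact ⟨k, hk, hk'⟩
  exact Nat.sInf_mem hne

theorem occ_succ_le (ι : ℕ → ℕ) (j m q : ℕ) (h : occPos ι j m < q) (hq : ι q = j) :
    occPos ι j (m + 1) ≤ q := Nat.sInf_le ⟨h, hq⟩

theorem occ_exists_between (n : ℕ) (ι : ℕ → ℕ) (hadm : Admissible n ι)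
    (hadap : Adapted n (cartanA n) ι) (i j : ℕ) (hi1 : 1 ≤ i) (hi2 : i ≤ n)
    (hj1 : 1 ≤ j) (hj2 : j ≤ n) (hij : i + 1 = j ∨ j + 1 = i) (m : ℕ) :
    ∃ q, occPos ι j (m + 1) < q ∧ q < occPos ι j (m + 2) ∧ ι q = i := by
  by_contra hcon
  push Not at hcon
  have a := occ_succ_mem n ι hadm j hj1 hj2 m
  have b := occ_succ_mem n ι hadm j hj1 hj2 (m + 1)
  refine hadap i j hi1 hi2 hj1 hj2 (by omega) ?_ (occPos ι j (m + 1)) (occPos ι j (m + 2))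
    (by omega) b.1 (Or.inr a.2) (Or.inr b.2) ?_ (by rw [a.2, b.2])
  · unfold cartanA
    rw [if_neg (by omega), if_pos hij]
    decide
  · intro q h1 h2
    refine ⟨hcon q h1 h2, fun hq => ?_⟩
    have : occPos ι j (m + 2) ≤ q := occ_succ_le ι j (m + 1) q h1 hq
    omega

theorem interlace (n : ℕ) (ι : ℕ → ℕ) (hadm : Admissible n ι)
    (hadap : Adapted n (cartanA n) ι) (i j : ℕ) (hi1 : 1 ≤ i) (hi2 : i ≤ n)
    (hj1 : 1 ≤ j) (hj2 : j ≤ n) (hij : i + 1 = j ∨ j + 1 = i)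
    (hf : occPos ι j 1 < occPos ι i 1) (m : ℕ) :
    occPos ι j (m + 1) < occPos ι i (m + 1) ∧ occPos ι i (m + 1) < occPos ι j (m + 2) := by
  induction m with
  | zero =>
    refine ⟨hf, ?_⟩
    obtain ⟨q, h1, h2, h3⟩ := occ_exists_between n ι hadm hadap i j hi1 hi2 hj1 hj2 hij 0
    have h0 : occPos ι i 0 = 0 := rfl
    have := occ_succ_le ι i 0 q (by omega) h3
    simp only [Nat.zero_add] at *
    omega
  | succ m ih =>
    obtain ⟨q, h1, h2, h3⟩ :=
      occ_exists_between n ι hadm hadap j i hj1 hj2 hi1 hi2 hij.symm m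
    have e1 := occ_succ_le ι j (m + 1) q (by omega) h3
    obtain ⟨r, r1, r2, r3⟩ := occ_exists_between n ι hadm hadap i j hi1 hi2 hj1 hj2 hij (m + 1)
    have e2 := occ_succ_le ι i (m + 1) r
      (by simp only [Nat.add_assoc, Nat.reduceAdd] at *; omega) r3
    simp only [Nat.add_assoc, Nat.reduceAdd] at *
    omega

theorem firstOcc_eq (ι : ℕ → ℕ) (i : ℕ) : firstOcc ι i = occPos ι i 1 := rfl

theorem occ_one_ne (n : ℕ) (ι : ℕ → ℕ) (hadm : Admissible n ι) (i j : ℕ) (hi1 : 1 ≤ i)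
    (hi2 : i ≤ n) (hj1 : 1 ≤ j) (hj2 : j ≤ n) (hij : i ≠ j) :
    occPos ι i 1 ≠ occPos ι j 1 := by
  intro h
  have a := (occ_succ_mem n ι hadm i hi1 hi2 0).2
  have b := (occ_succ_mem n ι hadm j hj1 hj2 0).2
  simp only [Nat.zero_add] at a b
  rw [h, b] at a
  exact hij a.symm

/-- The unique occurrence of a neighbour `i` between two consecutive occurrences of `j`. -/
theorem unique_between (n : ℕ) (ι : ℕ → ℕ) (hadm : Admissible n ι)
    (hadap : Adapted n (cartanA n) ι) (i j : ℕ) (hi1 : 1 ≤ i) (hi2 : i ≤ n)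
    (hj1 : 1 ≤ j) (hj2 : j ≤ n) (hij : i + 1 = j ∨ j + 1 = i) (m : ℕ) :
    occPos ι j (m + 1) < occPos ι i (m + 1 + pval ι i j) ∧
    occPos ι i (m + 1 + pval ι i j) < occPos ι j (m + 2) ∧
    ι (occPos ι i (m + 1 + pval ι i j)) = i ∧
    ∀ q, occPos ι j (m + 1) < q → q < occPos ι j (m + 2) → ι q = i →
      q = occPos ι i (m + 1 + pval ι i j) := by
  have hne := occ_one_ne n ι hadm i j hi1 hi2 hj1 hj2 (by omega)
  unfold pval
  rw [firstOcc_eq, firstOcc_eq]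
  by_cases hf : occPos ι i 1 < occPos ι j 1
  · rw [if_pos hf]
    have L := interlace n ι hadm hadap j i hj1 hj2 hi1 hi2 hij.symm hf
    have l1 := L m
    have l2 := L (m + 1)
    have hm := occ_succ_mem n ι hadm i hi1 hi2 (m + 1)
    simp only [Nat.add_assoc, Nat.reduceAdd] at *
    refine ⟨by omega, by omega, hm.2, fun q h1 h2 h3 => ?_⟩
    have e1 := occ_succ_le ι i (m + 1) q (by omega) h3
    have e2 : ¬ occPos ι i (m + 2) < q := fun h => by
      have := occ_succ_le ι i (m + 2) q h h3
      simp only [Nat.add_assoc, Nat.reduceAdd] at *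
      omega
    simp only [Nat.add_assoc, Nat.reduceAdd] at *
    omega
  · rw [if_neg hf, Nat.add_zero]
    have L := interlace n ι hadm hadap i j hi1 hi2 hj1 hj2 hij (by omega)
    have l1 := L m
    have l2 := L (m + 1)
    have hm := occ_succ_mem n ι hadm i hi1 hi2 m
    refine ⟨by omega, by omega, hm.2, fun q h1 h2 h3 => ?_⟩
    have e1 : occPos ι i (m + 1) ≤ q := by
      apply occ_succ_le ι i m q _ h3
      cases m with
      | zero =>
        have h0 : occPos ι i 0 = 0 := rfl
        omega
      | succ m =>
        have l3 := (L m).2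
        simp only [Nat.add_assoc, Nat.reduceAdd] at *
        omega
    have e2 : ¬ occPos ι i (m + 1) < q := fun h => by
      have := occ_succ_le ι i (m + 1) q h h3
      simp only [Nat.add_assoc, Nat.reduceAdd] at *
      omega
    omega

theorem sum_letter (n : ℕ) (ι : ℕ → ℕ) (hadm : Admissible n ι)
    (hadap : Adapted n (cartanA n) ι) (i j : ℕ)
    (hj1 : 1 ≤ j) (hj2 : j ≤ n) (hij : i + 1 = j ∨ j + 1 = i) (m : ℕ) (t : ℤ)
    (ht : 1 ≤ i → i ≤ n → t = ((m + 1 + pval ι i j : ℕ) : ℤ)) :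
    ∑ q ∈ Finset.Ioo (occPos ι j (m + 1)) (occPos ι j (m + 2)),
      (if ι q = i then xc q else 0) = xsj ι n t i := by
  unfold xsj
  by_cases h : 1 ≤ i ∧ i ≤ n
  · have ht' := ht h.1 h.2
    rw [if_pos ⟨by omega, h⟩]
    obtain ⟨u1, u2, u3, u4⟩ := unique_between n ι hadm hadap i j h.1 h.2 hj1 hj2 hij m
    rw [ht', Int.toNat_natCast,
      Finset.sum_eq_single (occPos ι i (m + 1 + pval ι i j)), if_pos u3]
    · intro q hq hne
      rw [Finset.mem_Ioo] at hq
      exact if_neg fun h3 => hne (u4 q hq.1 hq.2 h3)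
    · intro hn
      exact absurd (Finset.mem_Ioo.2 ⟨u1, u2⟩) hn
  · rw [if_neg (fun h' => h h'.2)]
    apply Finset.sum_eq_zero
    intro q hq
    rw [Finset.mem_Ioo] at hq
    have := hadm.1 q (by omega)
    exact if_neg (by rintro rfl; exact h this)

theorem PABC_succ (ι : ℕ → ℕ) (n j : ℕ) (h1 : 1 ≤ j) (h2 : j + 1 ≤ n) :
    PABC ι n (j + 1) = PABC ι n j + pval ι (j + 1) j := by
  unfold PABC
  rw [if_pos h2, if_pos (by omega), Finset.sum_Icc_succ_top (by omega)]
  rfl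

theorem pval_swap (n : ℕ) (ι : ℕ → ℕ) (hadm : Admissible n ι) (i j : ℕ) (hi1 : 1 ≤ i)
    (hi2 : i ≤ n) (hj1 : 1 ≤ j) (hj2 : j ≤ n) (hij : i ≠ j) :
    pval ι i j + pval ι j i = 1 := by
  have hne := occ_one_ne n ι hadm i j hi1 hi2 hj1 hj2 hij
  unfold pval
  rw [firstOcc_eq, firstOcc_eq]
  split_ifs <;> omega

/-- Lemma 3.3 (i): the type A box relation
`B^A_s(j+1) = B^A_s(j) - β_{s+P(j),j}` for `1 ≤ j ≤ n` and `s ≥ 1 - P(j)`. -/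
theorem boxA_rel (n : ℕ) (hn : 2 ≤ n) (ι : ℕ → ℕ)
    (hadm : Admissible n ι) (hadap : Adapted n (cartanA n) ι) :
    ∀ (j : ℕ) (s : ℤ), 1 ≤ j → j ≤ n → 1 - (PABC ι n j : ℤ) ≤ s →
      boxA ι n s (j + 1) =
        boxA ι n s j - betasj (cartanA n) ι (s + (PABC ι n j : ℤ)) j := by
  intro j s hj1 hj2 hs
  obtain ⟨m, hm⟩ : ∃ m : ℕ, s + (PABC ι n j : ℤ) = ((m + 1 : ℕ) : ℤ) :=
    ⟨(s + (PABC ι n j : ℤ) - 1).toNat, by omega⟩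
  have hM := occ_succ_mem n ι hadm j hj1 hj2 m
  have hk : kplus ι (occPos ι j (m + 1)) = occPos ι j (m + 2) := by
    unfold kplus
    rw [hM.2]
    rfl
  have S1 := sum_letter n ι hadm hadap (j + 1) j hj1 hj2 (Or.inr rfl) m
    (s + (PABC ι n (j + 1) : ℤ)) (by
      intro _ h2
      rw [PABC_succ ι n j hj1 h2]
      push_cast at *
      omega)
  have S2 := sum_letter n ι hadm hadap (j - 1) j hj1 hj2 (Or.inl (by omega)) m
    (s + (PABC ι n (j - 1) : ℤ) + 1) (by
      intro h1 h2
      have e := PABC_succ ι n (j - 1) h1 (by omega)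
      have e2 := pval_swap n ι hadm (j - 1) j h1 h2 hj1 hj2 (by omega)
      rw [Nat.sub_add_cancel hj1] at e
      push_cast at *
      omega)
  have hx1 : xsj ι n (s + (PABC ι n j : ℤ)) j = xc (occPos ι j (m + 1)) := by
    unfold xsj
    rw [hm, if_pos ⟨by omega, hj1, hj2⟩, Int.toNat_natCast]
  have hx2 : xsj ι n (s + (PABC ι n j : ℤ) + 1) j = xc (occPos ι j (m + 2)) := by
    unfold xsj
    rw [hm, if_pos ⟨by omega, hj1, hj2⟩]
    rfl
  have hsum : ∑ q ∈ Finset.Ioo (occPos ι j (m + 1)) (occPos ι j (m + 2)),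
      (cartanA n j (ι q) : ℚ) • xc q =
      -(xsj ι n (s + (PABC ι n (j + 1) : ℤ)) (j + 1)
        + xsj ι n (s + (PABC ι n (j - 1) : ℤ) + 1) (j - 1)) := by
    rw [← S1, ← S2, ← Finset.sum_add_distrib, ← Finset.sum_neg_distrib]
    apply Finset.sum_congr rfl
    intro q hq
    rw [Finset.mem_Ioo] at hq
    have hqj : j ≠ ι q := fun h => by
      have : occPos ι j (m + 2) ≤ q := occ_succ_le ι j (m + 1) q hq.1 h.symm
      omega
    unfold cartanA
    rw [if_neg hqj]
    by_cases c1 : ι q = j + 1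
    · rw [if_pos (by omega), if_pos c1, if_neg (by omega)]
      simp
    · by_cases c2 : ι q = j - 1
      · rw [if_pos (by omega), if_neg c1, if_pos c2]
        simp
      · rw [if_neg (by omega), if_neg c1, if_neg c2]
        simp
  unfold boxA betasj beta
  rw [Nat.add_sub_cancel, hx2, hx1, hm, Int.toNat_natCast, if_neg (by omega), hk, hM.2, hsum]
  abel
end

section
/- Let n ≥ 4, A the Cartan matrix of type D_n, and ι an admissible sequence adapted to A. Then the type D boxes satisfy: (1) B^D_s(j+1) = B^D_s(j) − β_{s+P(j),j} for 1 ≤ j ≤ n−1 and s ≥ 1 − P(j); (2) B^D_s(n̄) = B^D_s(n−1) − β_{s+P(n),n} for s ≥ 1 − P(n); (3) B^D_s(ovl(n−1)) = B^D_s(n) − β_{s+P(n),n} for s ≥ 1 − P(n); (4) B^D_s(ovl(j−1)) = B^D_s(j̄) − β_{s+P(j−1)+n−j, j−1} for 2 ≤ j ≤ n and s ≥ 1 + j − P(j−1) − n; (5) B^D_{l+2}(ovl(n+1)) + B^D_{l+1}(n̄) + B^D_l(ovl(n−1)) = B^D_l(ovl(n+1)) − β_{l+P(n), n} for l ≥ 1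 − P(n). -/
section helpers

theorem occ_spec {n : ℕ} {ι : ℕ → ℕ} (hadm : Admissible n ι) {i : ℕ} (h1 : 1 ≤ i) (h2 : i ≤ n)
    (s : ℕ) : occPos ι i s < occPos ι i (s + 1) ∧ ι (occPos ι i (s + 1)) = i := by
  have hne : {k | occPos ι i s < k ∧ ι k = i}.Nonempty := by
    obtain ⟨k, hk, hk'⟩ := hadm.2.2 i h1 h2 (occPos ι i s + 1)
    exact ⟨k, hk, hk'⟩
  exact Nat.sInf_mem hne

theorem occ_le {ι : ℕ → ℕ} {i s k : ℕ} (h : occPos ι i s < k) (hk : ι k = i) :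
    occPos ι i (s + 1) ≤ k := Nat.sInf_le ⟨h, hk⟩

/-- The alternation condition for a pair of letters. -/
def Alt (ι : ℕ → ℕ) (i j : ℕ) : Prop :=
  ∀ k l, 1 ≤ k → k < l → (ι k = i ∨ ι k = j) → (ι l = i ∨ ι l = j) →
      (∀ m, k < m → m < l → ι m ≠ i ∧ ι m ≠ j) → ι k ≠ ι l

theorem Alt.symm {ι : ℕ → ℕ} {i j : ℕ} (h : Alt ι i j) : Alt ι j i :=
  fun k l h1 h2 h3 h4 h5 => h k l h1 h2 h3.symm h4.symm (fun m a b => (h5 m a b).symm)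

theorem alt_step {n : ℕ} {ι : ℕ → ℕ} (hadm : Admissible n ι) {i j : ℕ} (hi1 : 1 ≤ i) (hi2 : i ≤ n)
    (hj1 : 1 ≤ j) (hj2 : j ≤ n) (hij : i ≠ j) (hA : Alt ι i j) (t u : ℕ)
    (h1 : occPos ι j t < occPos ι i (u + 1)) (h2 : occPos ι i (u + 1) < occPos ι j (t + 1)) :
    occPos ι j (t + 1) < occPos ι i (u + 2) := by
  obtain ⟨hj, hjι⟩ := occ_spec hadm hj1 hj2 t
  obtain ⟨ha, haι⟩ := occ_spec hadm hi1 hi2 u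
  obtain ⟨hc, hcι⟩ := occ_spec hadm hi1 hi2 (u + 1)
  by_contra hcon
  have hne : occPos ι j (t + 1) ≠ occPos ι i (u + 1 + 1) := by
    intro h; rw [h] at hjι; omega
  refine hA (occPos ι i (u + 1)) (occPos ι i (u + 1 + 1)) (by omega) hc (Or.inl haι) (Or.inl hcι)
    ?_ (by rw [haι, hcι])
  intro m hm1 hm2
  refine ⟨fun h => ?_, fun h => ?_⟩
  · have := occ_le hm1 h; omega
  · have := occ_le (lt_trans h1 hm1) h
    have h3 : u + 2 = u + 1 + 1 := rfl
    rw [h3] at hcon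
    omega

theorem alt_all {n : ℕ} {ι : ℕ → ℕ} (hadm : Admissible n ι) {i j : ℕ} (hi1 : 1 ≤ i) (hi2 : i ≤ n)
    (hj1 : 1 ≤ j) (hj2 : j ≤ n) (hij : i ≠ j) (hA : Alt ι i j)
    (h : occPos ι i 1 < occPos ι j 1) (t : ℕ) :
    occPos ι j t < occPos ι i (t + 1) ∧ occPos ι i (t + 1) < occPos ι j (t + 1) := by
  induction t with
  | zero =>
    refine ⟨?_, h⟩
    have := (occ_spec hadm hi1 hi2 0).1
    simpa [occPos] using this
  | succ t ih =>
    have h3 := alt_step hadm hi1 hi2 hj1 hj2 hij hA t t ih.1 ih.2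
    exact ⟨h3, alt_step hadm hj1 hj2 hi1 hi2 hij.symm hA.symm (t + 1) t ih.2 h3⟩

theorem first_ne {n : ℕ} {ι : ℕ → ℕ} (hadm : Admissible n ι) {i j : ℕ} (hi1 : 1 ≤ i) (hi2 : i ≤ n)
    (hj1 : 1 ≤ j) (hj2 : j ≤ n) (hij : i ≠ j) : firstOcc ι i ≠ firstOcc ι j := by
  have h1 : ι (firstOcc ι i) = i := (occ_spec hadm hi1 hi2 0).2
  have h2 : ι (firstOcc ι j) = j := (occ_spec hadm hj1 hj2 0).2
  intro h; rw [h] at h1; omega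

theorem pval_add {n : ℕ} {ι : ℕ → ℕ} (hadm : Admissible n ι) {i j : ℕ} (hi1 : 1 ≤ i) (hi2 : i ≤ n)
    (hj1 : 1 ≤ j) (hj2 : j ≤ n) (hij : i ≠ j) : pval ι i j + pval ι j i = 1 := by
  have := first_ne hadm hi1 hi2 hj1 hj2 hij
  unfold pval
  split_ifs <;> omega

/-- Exactly one `j` lies between two consecutive `i`. -/
theorem between {n : ℕ} {ι : ℕ → ℕ} (hadm : Admissible n ι) {i j : ℕ} (hi1 : 1 ≤ i) (hi2 : i ≤ n)
    (hj1 : 1 ≤ j) (hj2 : j ≤ n) (hij : i ≠ j) (hA : Alt ι i j) (m : ℕ) (hm : 1 ≤ m) (k : ℕ) :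
    (occPos ι i m < k ∧ k < occPos ι i (m + 1) ∧ ι k = j) ↔ k = occPos ι j (m + pval ι j i) := by
  obtain ⟨m, rfl⟩ : ∃ r, m = r + 1 := ⟨m - 1, by omega⟩
  have key : ∀ q, occPos ι j q < occPos ι i (m + 1) → occPos ι i (m + 1) < occPos ι j (q + 1) →
      occPos ι j (q + 1) < occPos ι i (m + 1 + 1) → occPos ι i (m + 1 + 1) < occPos ι j (q + 1 + 1) →
      ((occPos ι i (m + 1) < k ∧ k < occPos ι i (m + 1 + 1) ∧ ι k = j) ↔ k = occPos ι j (q + 1)) := by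
    intro q h1 h2 h3 h4
    constructor
    · rintro ⟨ha, hb, hc⟩
      have := occ_le (lt_trans h1 ha) hc
      by_contra hne
      have := occ_le (lt_of_le_of_ne this (Ne.symm hne)) hc
      omega
    · rintro rfl
      exact ⟨h2, h3, (occ_spec hadm hj1 hj2 q).2⟩
  have hne := first_ne hadm hi1 hi2 hj1 hj2 hij
  by_cases hlt : firstOcc ι j < firstOcc ι i
  · have hall := alt_all hadm hj1 hj2 hi1 hi2 hij.symm hA.symm hlt
    have hp : pval ι j i = 1 := by simp [pval, hlt]
    rw [hp]
    exact key (m + 1) (hall m).2 (hall (m + 1)).1 (hall (m + 1)).2 (hall (m + 2)).1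
  · have hlt' : firstOcc ι i < firstOcc ι j := by omega
    have hall := alt_all hadm hi1 hi2 hj1 hj2 hij hA hlt'
    have hp : pval ι j i = 0 := by simp [pval, hlt]
    rw [hp]
    exact key m (hall m).1 (hall m).2 (hall (m + 1)).1 (hall (m + 1)).2

theorem cartanD_comm_ne {n i j : ℕ} (h : cartanD n i j = -1) : i ≠ j := by
  rintro rfl
  simp [cartanD] at h

theorem beta_eq {n : ℕ} {ι : ℕ → ℕ} (hadm : Admissible n ι) (hadap : Adapted n (cartanD n) ι)
    {i : ℕ} (hi1 : 1 ≤ i) (hi2 : i ≤ n) (T : Finset ℕ)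
    (hT : ∀ j ∈ T, 1 ≤ j ∧ j ≤ n ∧ cartanD n i j = -1)
    (hT' : ∀ j, 1 ≤ j → j ≤ n → j ≠ i → j ∉ T → cartanD n i j = 0) (m : ℤ) (hm : 1 ≤ m) :
    betasj (cartanD n) ι m i = xsj ι n m i + xsj ι n (m + 1) i
      - ∑ j ∈ T, xsj ι n (m + (pval ι j i : ℤ)) j := by
  obtain ⟨q, rfl⟩ : ∃ q : ℕ, m = (q : ℤ) + 1 := ⟨(m - 1).toNat, by omega⟩
  have e1 : ((q : ℤ) + 1).toNat = q + 1 := by omega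
  have e2 : ((q : ℤ) + 1 + 1).toNat = q + 2 := by omega
  obtain ⟨ha, haι⟩ := occ_spec hadm hi1 hi2 q
  have hk : kplus ι (occPos ι i (q + 1)) = occPos ι i (q + 2) := by
    unfold kplus; rw [haι]; rfl
  have hx1 : xsj ι n ((q : ℤ) + 1) i = xc (occPos ι i (q + 1)) := by
    unfold xsj; rw [if_pos ⟨by omega, hi1, hi2⟩, e1]
  have hx2 : xsj ι n ((q : ℤ) + 1 + 1) i = xc (occPos ι i (q + 2)) := by
    unfold xsj; rw [if_pos ⟨by omega, hi1, hi2⟩, e2]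
  have hsum : (∑ k ∈ Finset.Ioo (occPos ι i (q + 1)) (occPos ι i (q + 2)),
      ((cartanD n i (ι k) : ℤ) : ℚ) • xc k)
      = - ∑ j ∈ T, xsj ι n ((q : ℤ) + 1 + (pval ι j i : ℤ)) j := by
    have s1 : ∀ k ∈ Finset.Ioo (occPos ι i (q + 1)) (occPos ι i (q + 2)),
        ((cartanD n i (ι k) : ℤ) : ℚ) • xc k = ∑ j ∈ T, if ι k = j then - xc k else 0 := by
      intro k hk
      rw [Finset.mem_Ioo] at hk
      rw [Finset.sum_ite_eq]
      split_ifs with h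
      · rw [(hT _ h).2.2]; simp
      · have hr := hadm.1 k (by omega)
        have hne : ι k ≠ i := by
          intro h
          have : occPos ι i (q + 2) ≤ k := occ_le hk.1 h
          omega
        rw [hT' _ hr.1 hr.2 hne h]; simp
    rw [Finset.sum_congr rfl s1, Finset.sum_comm, ← Finset.sum_neg_distrib]
    refine Finset.sum_congr rfl fun j hj => ?_
    obtain ⟨hj1, hj2, hj3⟩ := hT j hj
    have hij := cartanD_comm_ne hj3
    have hA : Alt ι i j := hadap i j hi1 hi2 hj1 hj2 hij (by rw [hj3]; decide)
    have hb := between hadm hi1 hi2 hj1 hj2 hij hA (q + 1) (by omega)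
    have hx : xsj ι n ((q : ℤ) + 1 + (pval ι j i : ℤ)) j
        = xc (occPos ι j (q + 1 + pval ι j i)) := by
      unfold xsj
      rw [if_pos ⟨by omega, hj1, hj2⟩]
      congr 2
    rw [hx, Finset.sum_eq_single (occPos ι j (q + 1 + pval ι j i))]
    · rw [if_pos ((hb _).2 rfl).2.2]
    · intro k hk hne
      rw [Finset.mem_Ioo] at hk
      rw [if_neg]
      intro h
      exact hne ((hb k).1 ⟨hk.1, hk.2, h⟩)
    · intro h
      have := (hb _).2 rfl
      exact absurd (Finset.mem_Ioo.2 ⟨this.1, this.2.1⟩) h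
  unfold betasj beta
  rw [e1, if_neg (by omega), hk, haι, hsum, hx1, hx2]
  abel

theorem PD_succ (ι : ℕ → ℕ) (n j : ℕ) (hj : 1 ≤ j) (hjn : j + 1 ≤ n - 1) :
    PD ι n (j + 1) = PD ι n j + pval ι (j + 1) j := by
  unfold PD
  rw [if_neg (by omega), if_pos (by omega), if_neg (by omega), if_pos (by omega),
    Finset.sum_Icc_succ_top (by omega)]
  simp

theorem PD_top (ι : ℕ → ℕ) (n : ℕ) (hn : 4 ≤ n) :
    PD ι n n = PD ι n (n - 2) + pval ι n (n - 2) := by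
  unfold PD
  rw [if_pos rfl, if_neg (by omega), if_pos (by omega)]

theorem xsj_zero (ι : ℕ → ℕ) (n : ℕ) (s : ℤ) : xsj ι n s 0 = 0 := by simp [xsj]

section

theorem cartanD_neg {n i j : ℕ} (h1 : i ≠ j) (h2 : ¬ ((i = n - 1 ∧ j = n) ∨ (i = n ∧ j = n - 1)))
    (h3 : (i + 1 = j ∨ j + 1 = i) ∨ (i = n ∧ j = n - 2) ∨ (i = n - 2 ∧ j = n)) :
    cartanD n i j = -1 := by
  unfold cartanD; rw [if_neg h1, if_neg h2, if_pos h3]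

theorem cartanD_zero {n i j : ℕ} (h1 : i ≠ j)
    (h3 : ((i = n - 1 ∧ j = n) ∨ (i = n ∧ j = n - 1)) ∨
      ¬ ((i + 1 = j ∨ j + 1 = i) ∨ (i = n ∧ j = n - 2) ∨ (i = n - 2 ∧ j = n))) :
    cartanD n i j = 0 := by
  unfold cartanD; rw [if_neg h1]
  by_cases h : ((i = n - 1 ∧ j = n) ∨ (i = n ∧ j = n - 1))
  · rw [if_pos h]
  · rw [if_neg h, if_neg (by tauto)]


/-- `β` for `i ≤ n - 3`. -/
theorem beta_low {n : ℕ} (hn : 4 ≤ n) {ι : ℕ → ℕ} (hadm : Admissible n ι)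
    (hadap : Adapted n (cartanD n) ι) (i : ℕ) (h1 : 1 ≤ i) (h2 : i ≤ n - 3) (s : ℤ) (hs : 1 ≤ s + PD ι n i) :
    betasj (cartanD n) ι (s + PD ι n i) i = xsj ι n (s + PD ι n i) i + xsj ι n (s + PD ι n i + 1) i
      - xsj ι n (s + PD ι n (i - 1) + 1) (i - 1) - xsj ι n (s + PD ι n (i + 1)) (i + 1) := by
  have hP := PD_succ ι n i h1 (by omega)
  by_cases hi : i = 1
  · subst hi
    rw [beta_eq hadm hadap le_rfl (by omega) {2} _ _ _ hs]
    · simp only [Finset.sum_singleton, Nat.sub_self, xsj_zero, Nat.reduceAdd] at *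
      rw [hP]; push_cast
      rw [sub_zero, ← add_assoc s]
    · intro j hj
      rw [Finset.mem_singleton] at hj
      exact ⟨by omega, by omega, cartanD_neg (by omega) (by omega) (by omega)⟩
    · intro j _ _ _ hj
      rw [Finset.mem_singleton] at hj
      exact cartanD_zero (by omega) (by omega)
  · obtain ⟨q, rfl⟩ : ∃ q, i = q + 1 := ⟨i - 1, by omega⟩
    have hP' := PD_succ ι n q (by omega) (by omega)
    have hp := pval_add hadm (i := q) (j := q + 1) (by omega) (by omega) (by omega) (by omega)
      (by omega)
    rw [beta_eq hadm hadap h1 (by omega) {q, q + 1 + 1} _ _ _ hs]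
    · rw [Finset.sum_pair (by omega), Nat.add_sub_cancel, sub_sub]
      have b1 : s + (PD ι n (q + 1) : ℤ) + (pval ι q (q + 1) : ℤ) = s + PD ι n q + 1 := by omega
      have b2 : s + (PD ι n (q + 1) : ℤ) + (pval ι (q + 1 + 1) (q + 1) : ℤ)
        = s + PD ι n (q + 1 + 1) := by omega
      rw [b1, b2]
    · intro j hj
      simp only [Finset.mem_insert, Finset.mem_singleton] at hj
      exact ⟨by omega, by omega, cartanD_neg (by omega) (by omega) (by omega)⟩
    · intro j _ _ _ hj
      simp only [Finset.mem_insert, Finset.mem_singleton] at hj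
      exact cartanD_zero (by omega) (by omega)

theorem beta_mid {n : ℕ} (hn : 4 ≤ n) {ι : ℕ → ℕ} (hadm : Admissible n ι)
    (hadap : Adapted n (cartanD n) ι) (s : ℤ) (hs : 1 ≤ s + PD ι n (n - 2)) :
    betasj (cartanD n) ι (s + PD ι n (n - 2)) (n - 2)
      = xsj ι n (s + PD ι n (n - 2)) (n - 2) + xsj ι n (s + PD ι n (n - 2) + 1) (n - 2)
      - xsj ι n (s + PD ι n (n - 3) + 1) (n - 3) - xsj ι n (s + PD ι n (n - 1)) (n - 1)
      - xsj ι n (s + PD ι n n) n := by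
  have hP := PD_succ ι n (n - 2) (by omega) (by omega)
  have hP' := PD_succ ι n (n - 3) (by omega) (by omega)
  have hP2 := PD_top ι n hn
  have hp := pval_add hadm (i := n - 3) (j := n - 2) (by omega) (by omega) (by omega) (by omega)
      (by omega)
  have a1 : n - 2 + 1 = n - 1 := by omega
  have a2 : n - 3 + 1 = n - 2 := by omega
  rw [a1] at hP
  rw [a2] at hP'
  rw [beta_eq hadm hadap (by omega) (by omega) {n - 3, n - 1, n} _ _ _ hs]
  · rw [Finset.sum_insert (by simp; omega), Finset.sum_pair (by omega), sub_sub, sub_sub]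
    have b1 : s + (PD ι n (n - 2) : ℤ) + (pval ι (n - 3) (n - 2) : ℤ)
      = s + PD ι n (n - 3) + 1 := by omega
    have b2 : s + (PD ι n (n - 2) : ℤ) + (pval ι (n - 1) (n - 2) : ℤ)
      = s + PD ι n (n - 1) := by omega
    have b3 : s + (PD ι n (n - 2) : ℤ) + (pval ι n (n - 2) : ℤ) = s + PD ι n n := by omega
    rw [b1, b2, b3]
  · intro j hj
    simp only [Finset.mem_insert, Finset.mem_singleton] at hj
    exact ⟨by omega, by omega, cartanD_neg (by omega) (by omega) (by omega)⟩
  · intro j _ _ _ hj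
    simp only [Finset.mem_insert, Finset.mem_singleton] at hj
    exact cartanD_zero (by omega) (by omega)

/-- `β` for the two end nodes `n-1` and `n`. -/
theorem beta_end {n : ℕ} (hn : 4 ≤ n) {ι : ℕ → ℕ} (hadm : Admissible n ι)
    (hadap : Adapted n (cartanD n) ι) (i : ℕ) (hi : i = n - 1 ∨ i = n) (s : ℤ) (hs : 1 ≤ s + PD ι n i) :
    betasj (cartanD n) ι (s + PD ι n i) i = xsj ι n (s + PD ι n i) i + xsj ι n (s + PD ι n i + 1) i
      - xsj ι n (s + PD ι n (n - 2) + 1) (n - 2) := by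
  have hP : PD ι n i = PD ι n (n - 2) + pval ι i (n - 2) := by
    rcases hi with rfl | rfl
    · have hP := PD_succ ι n (n - 2) (by omega) (by omega)
      have a1 : n - 2 + 1 = n - 1 := by omega
      rwa [a1] at hP
    · exact PD_top ι _ hn
  have hp := pval_add hadm (i := n - 2) (j := i) (by omega) (by omega) (by omega) (by omega)
      (by omega)
  rw [beta_eq hadm hadap (by omega) (by omega) {n - 2} _ _ _ hs]
  · rw [Finset.sum_singleton]
    congr 2; omega
  · intro j hj
    simp only [Finset.mem_singleton] at hj
    exact ⟨by omega, by omega, cartanD_neg (by omega) (by omega) (by omega)⟩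
  · intro j _ _ _ hj
    simp only [Finset.mem_singleton] at hj
    exact cartanD_zero (by omega) (by omega)

end

section

theorem box_low {n : ℕ} (hn : 4 ≤ n) (ι : ℕ → ℕ) (s : ℤ) (e : ℕ) (h1 : 1 ≤ e) (h2 : e ≤ n - 2) : boxD ι n s e =
    xsj ι n (s + (PD ι n e : ℤ)) e - xsj ι n (s + (PD ι n (e - 1) : ℤ) + 1) (e - 1) := by
  unfold boxD; rw [if_neg (by omega), if_pos h2]

theorem box_n1 {n : ℕ} (hn : 4 ≤ n) (ι : ℕ → ℕ) (s : ℤ) : boxD ι n s (n - 1) =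
    xsj ι n (s + (PD ι n (n - 1) : ℤ)) (n - 1) + xsj ι n (s + (PD ι n n : ℤ)) n
      - xsj ι n (s + (PD ι n (n - 2) : ℤ) + 1) (n - 2) := by
  unfold boxD; rw [if_neg (by omega), if_neg (by omega), if_pos rfl]

theorem box_n {n : ℕ} (hn : 4 ≤ n) (ι : ℕ → ℕ) (s : ℤ) : boxD ι n s n =
    xsj ι n (s + (PD ι n n : ℤ)) n - xsj ι n (s + (PD ι n (n - 1) : ℤ) + 1) (n - 1) := by
  unfold boxD; rw [if_neg (by omega), if_neg (by omega), if_neg (by omega), if_pos rfl]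

theorem box_nb {n : ℕ} (hn : 4 ≤ n) (ι : ℕ → ℕ) (s : ℤ) : boxD ι n s (n + 1) =
    xsj ι n (s + (PD ι n (n - 1) : ℤ)) (n - 1) - xsj ι n (s + (PD ι n n : ℤ) + 1) n := by
  unfold boxD
  rw [if_neg (by omega), if_neg (by omega), if_neg (by omega), if_neg (by omega), if_pos rfl]

theorem box_n1b {n : ℕ} (hn : 4 ≤ n) (ι : ℕ → ℕ) (s : ℤ) : boxD ι n s (n + 2) =
    xsj ι n (s + (PD ι n (n - 2) : ℤ) + 1) (n - 2)
      - xsj ι n (s + (PD ι n (n - 1) : ℤ) + 1) (n - 1)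
      - xsj ι n (s + (PD ι n n : ℤ) + 1) n := by
  unfold boxD
  rw [if_neg (by omega), if_neg (by omega), if_neg (by omega), if_neg (by omega),
    if_neg (by omega), if_pos rfl]

theorem box_bar {n : ℕ} (hn : 4 ≤ n) (ι : ℕ → ℕ) (s : ℤ) (j : ℕ) (h1 : 1 ≤ j) (h2 : j ≤ n - 2) : boxD ι n s (2 * n + 1 - j) =
    xsj ι n (s + (n : ℤ) - j + (PD ι n (j - 1) : ℤ)) (j - 1)
      - xsj ι n (s + (n : ℤ) - j + (PD ι n j : ℤ)) j := by
  unfold boxD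
  rw [if_neg (by omega), if_neg (by omega), if_neg (by omega), if_neg (by omega),
    if_neg (by omega), if_neg (by omega)]
  have a1 : 2 * n - (2 * n + 1 - j) = j - 1 := by omega
  have a2 : 2 * n + 1 - (2 * n + 1 - j) = j := by omega
  rw [a1, a2]
  congr 2 <;> ring

end

end helpers

/-- Lemma 3.3 (iv): the type D box relations (barred entries `j̄` are encoded as `2n+1-j`,
so `n̄ = n+1` and `ovl(n-1) = n+2`, and `ovl(n+1)` is encoded as `0`). -/
theorem boxD_rel (n : ℕ) (hn : 4 ≤ n) (ι : ℕ → ℕ)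
    (hadm : Admissible n ι) (hadap : Adapted n (cartanD n) ι) :
    (∀ (j : ℕ) (s : ℤ), 1 ≤ j → j ≤ n - 1 → 1 - (PD ι n j : ℤ) ≤ s →
      boxD ι n s (j + 1) =
        boxD ι n s j - betasj (cartanD n) ι (s + (PD ι n j : ℤ)) j) ∧
    (∀ s : ℤ, 1 - (PD ι n n : ℤ) ≤ s →
      boxD ι n s (n + 1) =
        boxD ι n s (n - 1) - betasj (cartanD n) ι (s + (PD ι n n : ℤ)) n) ∧
    (∀ s : ℤ, 1 - (PD ι n n : ℤ) ≤ s →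
      boxD ι n s (n + 2) =
        boxD ι n s n - betasj (cartanD n) ι (s + (PD ι n n : ℤ)) n) ∧
    (∀ (j : ℕ) (s : ℤ), 2 ≤ j → j ≤ n →
        1 + (j : ℤ) - (PD ι n (j - 1) : ℤ) - (n : ℤ) ≤ s →
      boxD ι n s (2 * n + 2 - j) =
        boxD ι n s (2 * n + 1 - j)
          - betasj (cartanD n) ι
              (s + (PD ι n (j - 1) : ℤ) + (n : ℤ) - (j : ℤ)) (j - 1)) ∧
    (∀ l : ℤ, 1 - (PD ι n n : ℤ) ≤ l →
      boxD ι n (l + 2) 0 + boxD ι n (l + 1) (n + 1) + boxD ι n l (n + 2) =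
        boxD ι n l 0 - betasj (cartanD n) ι (l + (PD ι n n : ℤ)) n) := by
  have hbox0 : ∀ s, boxD ι n s 0 = xsj ι n (s + (PD ι n n : ℤ)) n := by
    intro s; simp [boxD]
  refine ⟨?_, ?_, ?_, ?_, ?_⟩
  · intro j s h1 h2 hs
    rcases (by omega : j ≤ n - 3 ∨ j = n - 2 ∨ j = n - 1) with h | rfl | rfl
    · rw [box_low hn ι s (j + 1) (by omega) (by omega), box_low hn ι s j h1 (by omega),
        beta_low hn hadm hadap j h1 h s (by omega), Nat.add_sub_cancel]
      abel
    · have a1 : n - 2 + 1 = n - 1 := by omega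
      have a2 : n - 2 - 1 = n - 3 := by omega
      rw [a1, box_n1 hn, box_low hn ι s (n - 2) h1 le_rfl, beta_mid hn hadm hadap s (by omega), a2]
      abel
    · have a1 : n - 1 + 1 = n := by omega
      rw [a1, box_n hn, box_n1 hn, beta_end hn hadm hadap (n - 1) (Or.inl rfl) s (by omega)]
      abel
  · intro s hs
    rw [box_nb hn, box_n1 hn, beta_end hn hadm hadap n (Or.inr rfl) s (by omega)]
    abel
  · intro s hs
    rw [box_n1b hn, box_n hn, beta_end hn hadm hadap n (Or.inr rfl) s (by omega)]
    abel
  · intro j s h1 h2 hs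
    rcases (by omega : j = n ∨ j = n - 1 ∨ j ≤ n - 2) with rfl | rfl | h
    · have a1 : 2 * j + 2 - j = j + 2 := by omega
      have a2 : 2 * j + 1 - j = j + 1 := by omega
      have a3 : s + (PD ι j (j - 1) : ℤ) + (j : ℤ) - (j : ℤ) = s + (PD ι j (j - 1) : ℤ) := by ring
      rw [a1, a2, a3, box_n1b hn, box_nb hn,
        beta_end hn hadm hadap (j - 1) (Or.inl rfl) s (by omega)]
      abel
    · have a1 : 2 * n + 2 - (n - 1) = 2 * n + 1 - (n - 2) := by omega
      have a2 : 2 * n + 1 - (n - 1) = n + 2 := by omega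
      have a4 : n - 1 - 1 = n - 2 := by omega
      have a5 : n - 2 - 1 = n - 3 := by omega
      rw [a4] at hs ⊢
      have a3 : s + (PD ι n (n - 2) : ℤ) + (n : ℤ) - ((n - 1 : ℕ) : ℤ)
        = (s + 1) + (PD ι n (n - 2) : ℤ) := by omega
      have a6 : s + (n : ℤ) - ((n - 2 : ℕ) : ℤ) = s + 2 := by omega
      rw [a1, a2, a3, box_bar hn ι s (n - 2) (by omega) le_rfl, box_n1b hn,
        beta_mid hn hadm hadap (s + 1) (by omega), a5, a6]
      have c1 : ∀ x : ℤ, s + 1 + x + 1 = s + 2 + x := fun x => by ring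
      have c2 : ∀ x : ℤ, s + 1 + x = s + x + 1 := fun x => by ring
      simp only [c1]
      simp only [c2]
      abel
    · obtain ⟨q, rfl⟩ : ∃ q, j = q + 1 := ⟨j - 1, by omega⟩
      have a1 : 2 * n + 2 - (q + 1) = 2 * n + 1 - q := by omega
      rw [Nat.add_sub_cancel] at hs ⊢
      obtain ⟨t, ht⟩ : ∃ t : ℤ, t = s + n - ((q + 1 : ℕ) : ℤ) := ⟨_, rfl⟩
      have a3 : s + (PD ι n q : ℤ) + (n : ℤ) - ((q + 1 : ℕ) : ℤ) = t + (PD ι n q : ℤ) := by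
        rw [ht]; ring
      have a6 : s + (n : ℤ) - (q : ℤ) = t + 1 := by rw [ht]; push_cast; ring
      rw [a1, a3, box_bar hn ι s (q + 1) (by omega) h, box_bar hn ι s q (by omega) (by omega),
        a6, ← ht, beta_low hn hadm hadap q (by omega) (by omega) t (by omega), Nat.add_sub_cancel]
      have c1 : ∀ x : ℤ, t + 1 + x = t + x + 1 := fun x => by ring
      simp only [c1]
      abel
  · intro s hs
    rw [hbox0, hbox0, box_nb hn, box_n1b hn, beta_end hn hadm hadap n (Or.inr rfl) s (by omega)]
    have c1 : ∀ x : ℤ, s + 1 + x + 1 = s + 2 + x := fun x => by ring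
    have c2 : ∀ x : ℤ, s + 1 + x = s + x + 1 := fun x => by ring
    simp only [c1]
    simp only [c2]
    abel
end
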